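/- Let f¹, f² : ℝ⁵ → ℝ be smooth functions of (t, x, y, ζ₁, ζ₂), let γ¹ : ℝ → ℝ be smooth, and let ψ : ℝ³ → ℝ be a smooth solution of ζ_t + ψ_x ζ_y − ψ_y ζ_x = ∂_x[f¹(t,x,y,ζ_x,ζ_y)] + ∂_y[f²(t,x,y,ζ_x,ζ_y)], where ζ := ψ_xx + ψ_yy and ∂_x, ∂_y differentiate the full composition. Then ψ̃(t,x,y) := ψ(t, x − γ¹(t), y) − γ¹'(t)·y is a smooth solution of the equation from the same class with arbitrary elements f̃^i(t,x,y,ζ₁,ζ₂) := f^i(t, x − γ¹(t), y, ζ₁, ζ₂) for i = 1, 2. -/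

import Mathlib

noncomputable section

abbrev V5 := ℝ × ℝ × ℝ × ℝ × ℝ

/-- Partial derivative with respect to t. -/
def dT (f : ℝ × ℝ × ℝ → ℝ) (p : ℝ × ℝ × ℝ) : ℝ := fderiv ℝ f p (1, 0, 0)
/-- Partial derivative with respect to x. -/
def dX (f : ℝ × ℝ × ℝ → ℝ) (p : ℝ × ℝ × ℝ) : ℝ := fderiv ℝ f p (0, 1, 0)
/-- Partial derivative with respect to y. -/
def dY (f : ℝ × ℝ × ℝ → ℝ) (p : ℝ × ℝ × ℝ) : ℝ := fderiv ℝ f p (0, 0, 1)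

/-- The vorticity ζ := ψ_xx + ψ_yy. -/
def vort (ψ : ℝ × ℝ × ℝ → ℝ) : ℝ × ℝ × ℝ → ℝ := fun p => dX (dX ψ) p + dY (dY ψ) p

/-- The full composition (t,x,y) ↦ f(t, x, y, ζ_x(t,x,y), ζ_y(t,x,y)). -/
def fcomp (f : V5 → ℝ) (ψ : ℝ × ℝ × ℝ → ℝ) : ℝ × ℝ × ℝ → ℝ :=
  fun p => f (p.1, p.2.1, p.2.2, dX (vort ψ) p, dY (vort ψ) p)

/-- ψ is a smooth solution of the generalized vorticity equation
ζ_t + ψ_x ζ_y − ψ_y ζ_x = ∂_x[f¹(t,x,y,ζ_x,ζ_y)] + ∂_y[f²(t,x,y,ζ_x,ζ_y)]. -/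
def IsGenVortSol (f1 f2 : V5 → ℝ) (ψ : ℝ × ℝ × ℝ → ℝ) : Prop :=
  ContDiff ℝ (⊤ : ℕ∞) ψ ∧ ∀ p : ℝ × ℝ × ℝ,
    dT (vort ψ) p + dX ψ p * dY (vort ψ) p - dY ψ p * dX (vort ψ) p
      = dX (fcomp f1 ψ) p + dY (fcomp f2 ψ) p

/-!
In the frame moving with displacement `γ` along the `x`-axis, `ζ_t` acquires the extra term
`-γ' ζ_x`. Subtracting the stream function `γ' y` leaves `ζ` and `ψ_x` unchanged and turns `ψ_y`
into `ψ_y - γ'`, so `-ψ_y ζ_x` acquires `+γ' ζ_x` and the two extra terms cancel. The right-hand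
side involves only `x`- and `y`-derivatives, which commute with the change of frame.
-/

section MovingFrame

/-- The passage to the frame whose displacement along the `x`-axis at time `t` is `γ t`. The
remaining coordinates are collected in `E`, so that it acts both on `(t, x, y)` and on the arguments
`(t, x, y, ζ₁, ζ₂)` of the arbitrary elements. -/
def movingFrame {E : Type*} (γ : ℝ → ℝ) (p : ℝ × ℝ × E) : ℝ × ℝ × E :=
  (p.1, p.2.1 - γ p.1, p.2.2)

variable {E : Type*} [NormedAddCommGroup E] [NormedSpace ℝ E] {γ : ℝ → ℝ}

lemma contDiff_movingFrame {n : WithTop ℕ∞} (hγ : ContDiff ℝ n γ) :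
    ContDiff ℝ n (movingFrame γ : ℝ × ℝ × E → ℝ × ℝ × E) := by
  unfold movingFrame
  fun_prop

lemma differentiableAt_movingFrame {p : ℝ × ℝ × E} (hγ : DifferentiableAt ℝ γ p.1) :
    DifferentiableAt ℝ (movingFrame γ) p := by
  unfold movingFrame
  fun_prop

lemma fderiv_movingFrame_apply {p : ℝ × ℝ × E} (hγ : DifferentiableAt ℝ γ p.1)
    (v : ℝ × ℝ × E) :
    fderiv ℝ (movingFrame γ) p v = (v.1, v.2.1 - deriv γ p.1 * v.1, v.2.2) := by
  have hγt := hγ.hasDerivAt.comp_hasFDerivAt p (hasFDerivAt_fst (𝕜 := ℝ))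
  have hsnd : HasFDerivAt Prod.snd (ContinuousLinearMap.snd ℝ ℝ (ℝ × E)) p := hasFDerivAt_snd
  have hframe : HasFDerivAt (movingFrame γ) _ p :=
    hasFDerivAt_fst.prodMk ((hsnd.fst.sub hγt).prodMk hsnd.snd)
  rw [hframe.fderiv]
  simp

lemma fderiv_comp_movingFrame_apply {F : Type*} [NormedAddCommGroup F] [NormedSpace ℝ F]
    {g : ℝ × ℝ × E → F} {p : ℝ × ℝ × E} (hγ : DifferentiableAt ℝ γ p.1)
    (hg : DifferentiableAt ℝ g (movingFrame γ p)) (v : ℝ × ℝ × E) :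
    fderiv ℝ (g ∘ movingFrame γ) p v =
      fderiv ℝ g (movingFrame γ p) (v.1, v.2.1 - deriv γ p.1 * v.1, v.2.2) := by
  rw [fderiv_comp p hg (differentiableAt_movingFrame hγ), ContinuousLinearMap.comp_apply,
    fderiv_movingFrame_apply hγ]

end MovingFrame

section PartialDerivatives

variable {f g : ℝ × ℝ × ℝ → ℝ} {γ : ℝ → ℝ} {m n : WithTop ℕ∞}

lemma contDiff_dX (hf : ContDiff ℝ n f) (hmn : m + 1 ≤ n) : ContDiff ℝ m (dX f) :=
  (hf.fderiv_right hmn).clm_apply contDiff_const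

lemma contDiff_dY (hf : ContDiff ℝ n f) (hmn : m + 1 ≤ n) : ContDiff ℝ m (dY f) :=
  (hf.fderiv_right hmn).clm_apply contDiff_const

lemma differentiable_dX (hf : ContDiff ℝ 2 f) : Differentiable ℝ (dX f) :=
  (contDiff_dX hf one_add_one_eq_two.le).differentiable one_ne_zero

lemma differentiable_dY (hf : ContDiff ℝ 2 f) : Differentiable ℝ (dY f) :=
  (contDiff_dY hf one_add_one_eq_two.le).differentiable one_ne_zero

lemma dX_sub (hf : Differentiable ℝ f) (hg : Differentiable ℝ g) :
    dX (f - g) = dX f - dX g := by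
  funext p
  simp [dX, fderiv_sub (hf p) (hg p)]

lemma dY_sub (hf : Differentiable ℝ f) (hg : Differentiable ℝ g) :
    dY (f - g) = dY f - dY g := by
  funext p
  simp [dY, fderiv_sub (hf p) (hg p)]

lemma dX_comp_movingFrame (hγ : Differentiable ℝ γ) (hg : Differentiable ℝ g) :
    dX (g ∘ movingFrame γ) = dX g ∘ movingFrame γ := by
  funext p
  simp [dX, fderiv_comp_movingFrame_apply (hγ _) (hg _)]

lemma dY_comp_movingFrame (hγ : Differentiable ℝ γ) (hg : Differentiable ℝ g) :
    dY (g ∘ movingFrame γ) = dY g ∘ movingFrame γ := by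
  funext p
  simp [dY, fderiv_comp_movingFrame_apply (hγ _) (hg _)]

lemma dT_comp_movingFrame {p : ℝ × ℝ × ℝ} (hγ : DifferentiableAt ℝ γ p.1)
    (hg : DifferentiableAt ℝ g (movingFrame γ p)) :
    dT (g ∘ movingFrame γ) p =
      dT g (movingFrame γ p) - deriv γ p.1 * dX g (movingFrame γ p) := by
  have hdir : ((1, 0 - deriv γ p.1 * 1, 0) : ℝ × ℝ × ℝ) =
      (1, 0, 0) - deriv γ p.1 • (0, 1, 0) := by simp
  simp only [dT, dX]
  rw [fderiv_comp_movingFrame_apply hγ hg, hdir, map_sub, map_smul, smul_eq_mul]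

end PartialDerivatives

section UniformStream

variable {c γ : ℝ → ℝ} {g : ℝ × ℝ × ℝ → ℝ}

/-- The stream function `c(t) y` of a spatially uniform flow along the `x`-axis; its velocity
`(-ψ_y, ψ_x)` is `(-c(t), 0)`. -/
def uniformStream (c : ℝ → ℝ) (p : ℝ × ℝ × ℝ) : ℝ := c p.1 * p.2.2

lemma contDiff_uniformStream {n : WithTop ℕ∞} (hc : ContDiff ℝ n c) :
    ContDiff ℝ n (uniformStream c) := by
  unfold uniformStream
  fun_prop

lemma differentiable_uniformStream (hc : Differentiable ℝ c) :
    Differentiable ℝ (uniformStream c) := by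
  unfold uniformStream
  fun_prop

lemma fderiv_comp_fst_apply {E : Type*} [NormedAddCommGroup E] [NormedSpace ℝ E] {p : ℝ × E}
    (hc : DifferentiableAt ℝ c p.1) (v : ℝ × E) :
    fderiv ℝ (fun q : ℝ × E => c q.1) p v = deriv c p.1 * v.1 := by
  have hct : HasFDerivAt (fun q : ℝ × E => c q.1) _ p :=
    hc.hasDerivAt.comp_hasFDerivAt p (hasFDerivAt_fst (𝕜 := ℝ))
  simp [hct.fderiv]

lemma fderiv_uniformStream_apply {p : ℝ × ℝ × ℝ} (hc : DifferentiableAt ℝ c p.1)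
    (v : ℝ × ℝ × ℝ) :
    fderiv ℝ (uniformStream c) p v = c p.1 * v.2.2 + p.2.2 * (deriv c p.1 * v.1) := by
  have hct : DifferentiableAt ℝ (fun q : ℝ × ℝ × ℝ => c q.1) p := by fun_prop
  have hsnd : HasFDerivAt Prod.snd (ContinuousLinearMap.snd ℝ ℝ (ℝ × ℝ)) p := hasFDerivAt_snd
  have hprod : HasFDerivAt (uniformStream c) _ p := hct.hasFDerivAt.mul hsnd.snd
  rw [hprod.fderiv]
  simp [fderiv_comp_fst_apply hc]

lemma dX_uniformStream (hc : Differentiable ℝ c) : dX (uniformStream c) = 0 := by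
  funext p
  simp [dX, fderiv_uniformStream_apply (hc _)]

lemma dY_uniformStream (hc : Differentiable ℝ c) :
    dY (uniformStream c) = fun p => c p.1 := by
  funext p
  simp [dY, fderiv_uniformStream_apply (hc _)]

lemma vort_uniformStream (hc : Differentiable ℝ c) : vort (uniformStream c) = 0 := by
  funext p
  rw [vort, dX_uniformStream hc, dY_uniformStream hc]
  simp [dX, dY, fderiv_comp_fst_apply (hc _)]

lemma dX_comp_movingFrame_sub_uniformStream (hγ : Differentiable ℝ γ) (hc : Differentiable ℝ c)
    (hg : Differentiable ℝ g) :
    dX (g ∘ movingFrame γ - uniformStream c) = dX g ∘ movingFrame γ := by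
  rw [dX_sub (hg.comp fun p => differentiableAt_movingFrame (hγ p.1))
    (differentiable_uniformStream hc), dX_comp_movingFrame hγ hg, dX_uniformStream hc, sub_zero]

lemma dY_comp_movingFrame_sub_uniformStream (hγ : Differentiable ℝ γ) (hc : Differentiable ℝ c)
    (hg : Differentiable ℝ g) :
    dY (g ∘ movingFrame γ - uniformStream c) = dY g ∘ movingFrame γ - fun p => c p.1 := by
  rw [dY_sub (hg.comp fun p => differentiableAt_movingFrame (hγ p.1))
    (differentiable_uniformStream hc), dY_comp_movingFrame hγ hg, dY_uniformStream hc]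

end UniformStream

section Vorticity

variable {φ ψ : ℝ × ℝ × ℝ → ℝ} {γ : ℝ → ℝ} {m n : WithTop ℕ∞}

lemma contDiff_vort (hψ : ContDiff ℝ n ψ) (hmn : m + 1 + 1 ≤ n) : ContDiff ℝ m (vort ψ) :=
  (contDiff_dX (contDiff_dX hψ hmn) le_rfl).add (contDiff_dY (contDiff_dY hψ hmn) le_rfl)

lemma vort_sub (hφ : ContDiff ℝ 2 φ) (hψ : ContDiff ℝ 2 ψ) :
    vort (φ - ψ) = vort φ - vort ψ := by
  have hφ₁ := hφ.differentiable two_ne_zero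
  have hψ₁ := hψ.differentiable two_ne_zero
  funext p
  simp only [vort, Pi.sub_apply,
    dX_sub hφ₁ hψ₁, dX_sub (differentiable_dX hφ) (differentiable_dX hψ),
    dY_sub hφ₁ hψ₁, dY_sub (differentiable_dY hφ) (differentiable_dY hψ)]
  ring

lemma vort_comp_movingFrame (hγ : Differentiable ℝ γ) (hψ : ContDiff ℝ 2 ψ) :
    vort (ψ ∘ movingFrame γ) = vort ψ ∘ movingFrame γ := by
  have hψ₁ := hψ.differentiable two_ne_zero
  funext p
  simp only [vort, Function.comp_apply,
    dX_comp_movingFrame hγ hψ₁, dX_comp_movingFrame hγ (differentiable_dX hψ),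
    dY_comp_movingFrame hγ hψ₁, dY_comp_movingFrame hγ (differentiable_dY hψ)]

lemma vort_comp_movingFrame_sub_uniformStream {c : ℝ → ℝ} (hγ : ContDiff ℝ 2 γ)
    (hc : ContDiff ℝ 2 c) (hψ : ContDiff ℝ 2 ψ) :
    vort (ψ ∘ movingFrame γ - uniformStream c) = vort ψ ∘ movingFrame γ := by
  rw [vort_sub (hψ.comp (contDiff_movingFrame hγ)) (contDiff_uniformStream hc),
    vort_comp_movingFrame (hγ.differentiable two_ne_zero) hψ,
    vort_uniformStream (hc.differentiable two_ne_zero), sub_zero]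

lemma differentiable_fcomp {f : V5 → ℝ} (hf : Differentiable ℝ f)
    (hζ : ContDiff ℝ 2 (vort ψ)) : Differentiable ℝ (fcomp f ψ) := by
  have hζx := differentiable_dX hζ
  have hζy := differentiable_dY hζ
  unfold fcomp
  fun_prop

lemma fcomp_comp_movingFrame (f : V5 → ℝ) (hγ : Differentiable ℝ γ)
    (hζ : Differentiable ℝ (vort ψ)) (hφ : vort φ = vort ψ ∘ movingFrame γ) :
    fcomp (f ∘ movingFrame γ) φ = fcomp f ψ ∘ movingFrame γ := by
  funext p
  simp only [fcomp, hφ, dX_comp_movingFrame hγ hζ, dY_comp_movingFrame hγ hζ]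
  rfl

end Vorticity

theorem equivalence_transformation_X_gamma_general {f1 f2 : V5 → ℝ} (hf1 : Differentiable ℝ f1)
    (hf2 : Differentiable ℝ f2) {γ : ℝ → ℝ} (hγ : ContDiff ℝ (⊤ : ℕ∞) γ) {ψ : ℝ × ℝ × ℝ → ℝ}
    (h : IsGenVortSol f1 f2 ψ) :
    IsGenVortSol (f1 ∘ movingFrame γ) (f2 ∘ movingFrame γ)
      (ψ ∘ movingFrame γ - uniformStream (deriv γ)) := by
  obtain ⟨hψ, hsol⟩ := h
  obtain ⟨hγd, hγ'⟩ := contDiff_infty_iff_deriv.1 hγ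
  have hγ'd : Differentiable ℝ (deriv γ) := hγ'.differentiable (by simp)
  have hψd : Differentiable ℝ ψ := hψ.differentiable (by simp)
  have hζ : ContDiff ℝ 2 (vort ψ) := contDiff_infty.1 (contDiff_vort hψ (by simp)) 2
  have hζd : Differentiable ℝ (vort ψ) := hζ.differentiable two_ne_zero
  have hφζ : vort (ψ ∘ movingFrame γ - uniformStream (deriv γ)) = vort ψ ∘ movingFrame γ :=
    vort_comp_movingFrame_sub_uniformStream (contDiff_infty.1 hγ 2) (contDiff_infty.1 hγ' 2)
      (contDiff_infty.1 hψ 2)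
  refine ⟨(hψ.comp (contDiff_movingFrame hγ)).sub (contDiff_uniformStream hγ'), fun p => ?_⟩
  rw [fcomp_comp_movingFrame f1 hγd hζd hφζ, fcomp_comp_movingFrame f2 hγd hζd hφζ, hφζ,
    dX_comp_movingFrame_sub_uniformStream hγd hγ'd hψd,
    dY_comp_movingFrame_sub_uniformStream hγd hγ'd hψd,
    dT_comp_movingFrame (hγd _) (hζd _), dX_comp_movingFrame hγd hζd, dY_comp_movingFrame hγd hζd,
    dX_comp_movingFrame hγd (differentiable_fcomp hf1 hζ),
    dY_comp_movingFrame hγd (differentiable_fcomp hf2 hζ)]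
  simp only [Function.comp_apply, Pi.sub_apply]
  linear_combination hsol (movingFrame γ p)

theorem equivalence_transformation_X_gamma
    (f1 f2 : V5 → ℝ) (hf1 : ContDiff ℝ (⊤ : ℕ∞) f1) (hf2 : ContDiff ℝ (⊤ : ℕ∞) f2)
    (γ1 : ℝ → ℝ) (hγ1 : ContDiff ℝ (⊤ : ℕ∞) γ1)
    (ψ : ℝ × ℝ × ℝ → ℝ) (h : IsGenVortSol f1 f2 ψ) :
    IsGenVortSol
      (fun q => f1 (q.1, q.2.1 - γ1 q.1, q.2.2.1, q.2.2.2.1, q.2.2.2.2))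
      (fun q => f2 (q.1, q.2.1 - γ1 q.1, q.2.2.1, q.2.2.2.1, q.2.2.2.2))
      (fun p => ψ (p.1, p.2.1 - γ1 p.1, p.2.2) - deriv γ1 p.1 * p.2.2) :=
  equivalence_transformation_X_gamma_general (hf1.differentiable (by simp))
    (hf2.differentiable (by simp)) hγ1 h
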